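/- arXiv:2007.12666 — 3 statements merged into one kernel-verified Lean document; each statement's English description precedes it below -/
import Mathlib

section
/- Let n, p, q ∈ ℕ, and for each i let aᵢ < 0 < Aᵢ be real numbers, with componentwise barrier maps bᵢ(x) = log(Aᵢ(aᵢ−x)/(aᵢ(Aᵢ−x))), inverses bᵢ⁻¹(y) = aᵢAᵢ(e^y − 1)/(aᵢ·e^y − Aᵢ), and Bᵢ(y) = (aᵢ²·e^y − 2aᵢAᵢ + Aᵢ²·e^{−y})/(Aᵢ·aᵢ² − aᵢ·Aᵢ²). Let f : ℝⁿ → ℝ^{n×p}, g : ℝⁿ → ℝ^{n×q}, θ ∈ ℝᵖ, and ζ : ℝⁿ × ℝ → ℝ^q. Suppose s : [0,∞) → ℝⁿ is such that for every t ≥ 0 and every coordinate i, the i-th component sᵢ has derivative at t equal to Bᵢ(sᵢ(t)) · (f(b⁻¹(s(t)))·θ + g(b⁻¹(s(t)))·ζ(s(t), t))ᵢ, where b⁻¹(s) denotes componentwise application of bᵢ⁻¹. Then the function x(t) := b⁻¹(s(t)) satisfies, for every t ≥ 0 and every i: (a) aᵢ < xᵢ(t) < Aᵢ, and (b) xᵢ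 has derivative at t equal to (f(x(t))·θ + g(x(t))·ξ(x(t), t))ᵢ, where ξ(x, t) := ζ(b(x), t) and b(x) denotes componentwise application of bᵢ. -/
open Matrix

/-- The componentwise barrier function `b(x) = log(A(a−x)/(a(A−x)))`. -/
noncomputable def barrierFun (a A x : ℝ) : ℝ := Real.log (A * (a - x) / (a * (A - x)))

/-- The componentwise inverse barrier function `b⁻¹(y) = aA(e^y − 1)/(a·e^y − A)`. -/
noncomputable def barrierInv (a A y : ℝ) : ℝ :=
  a * A * (Real.exp y - 1) / (a * Real.exp y - A)

/-- The function `B(y) = (a²·e^y − 2aA + A²·e^{−y})/(A·a² − a·A²)`. -/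
noncomputable def barrierB (a A y : ℝ) : ℝ :=
  (a ^ 2 * Real.exp y - 2 * a * A + A ^ 2 * Real.exp (-y)) / (A * a ^ 2 - a * A ^ 2)

/-!
The map `b⁻¹` satisfies `(b⁻¹)' = 1 / B`, so the factor `B(sᵢ)` in the transformed dynamics is
cancelled by the chain rule for `b⁻¹ ∘ sᵢ`. Confinement to the box concerns `b⁻¹` alone: for
`a < 0 < A` it maps the whole line into `(a, A)`, whatever the trajectory `s` is.
-/

section BarrierInv

variable {a A y : ℝ}

theorem barrierInv_sub_lower (h : a * Real.exp y - A ≠ 0) :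
    barrierInv a A y - a = a * Real.exp y * (A - a) / (a * Real.exp y - A) := by
  rw [barrierInv]
  field_simp
  ring

theorem upper_sub_barrierInv (h : a * Real.exp y - A ≠ 0) :
    A - barrierInv a A y = A * (a - A) / (a * Real.exp y - A) := by
  rw [barrierInv]
  field_simp
  ring

theorem mul_exp_sub_neg (ha : a < 0) (hA : 0 < A) (y : ℝ) : a * Real.exp y - A < 0 :=
  sub_neg.2 ((mul_neg_of_neg_of_pos ha (Real.exp_pos y)).trans hA)

theorem barrierInv_mem_Ioo (ha : a < 0) (hA : 0 < A) (y : ℝ) :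
    barrierInv a A y ∈ Set.Ioo a A := by
  have hden := mul_exp_sub_neg ha hA y
  have haA := ha.trans hA
  constructor
  · rw [← sub_pos, barrierInv_sub_lower hden.ne]
    have hnum : a * Real.exp y * (A - a) < 0 :=
      mul_neg_of_neg_of_pos (mul_neg_of_neg_of_pos ha (Real.exp_pos y)) (sub_pos.2 haA)
    exact div_pos_of_neg_of_neg hnum hden
  · rw [← sub_pos, upper_sub_barrierInv hden.ne]
    exact div_pos_of_neg_of_neg (mul_neg_of_pos_of_neg hA (sub_neg.2 haA)) hden

theorem barrierFun_barrierInv (ha : a ≠ 0) (hA : A ≠ 0) (haA : a ≠ A)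
    (h : a * Real.exp y - A ≠ 0) : barrierFun a A (barrierInv a A y) = y := by
  have haA' : a - A ≠ 0 := sub_ne_zero.2 haA
  have hratio : A * (a - barrierInv a A y) / (a * (A - barrierInv a A y)) = Real.exp y := by
    rw [← neg_sub _ a, barrierInv_sub_lower h, upper_sub_barrierInv h]
    field_simp
    ring
  rw [barrierFun, hratio, Real.log_exp]

theorem barrierB_eq_sq_div (a A y : ℝ) :
    barrierB a A y = (a * Real.exp y - A) ^ 2 / (a * A * (a - A) * Real.exp y) := by
  have hnum : a ^ 2 * Real.exp y - 2 * a * A + A ^ 2 * Real.exp (-y) =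
      (a * Real.exp y - A) ^ 2 / Real.exp y := by
    rw [Real.exp_neg]
    field_simp
    ring
  have hden : A * a ^ 2 - a * A ^ 2 = a * A * (a - A) := by ring
  rw [barrierB, hnum, hden, div_div, mul_comm (Real.exp y)]

theorem barrierB_ne_zero (ha : a ≠ 0) (hA : A ≠ 0) (haA : a ≠ A)
    (h : a * Real.exp y - A ≠ 0) : barrierB a A y ≠ 0 := by
  rw [barrierB_eq_sq_div]
  exact div_ne_zero (pow_ne_zero 2 h)
    (mul_ne_zero (mul_ne_zero (mul_ne_zero ha hA) (sub_ne_zero.2 haA)) (Real.exp_ne_zero y))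

theorem hasDerivAt_barrierInv (h : a * Real.exp y - A ≠ 0) :
    HasDerivAt (barrierInv a A) (barrierB a A y)⁻¹ y := by
  have hnum := ((Real.hasDerivAt_exp y).sub_const 1).const_mul (a * A)
  have hden := ((Real.hasDerivAt_exp y).const_mul a).sub_const A
  refine (hnum.fun_div hden h).congr_deriv ?_
  rw [barrierB_eq_sq_div, inv_div]
  ring

theorem hasDerivWithinAt_barrierInv_comp {σ : ℝ → ℝ} {T : Set ℝ} {t v : ℝ}
    (ha : a ≠ 0) (hA : A ≠ 0) (haA : a ≠ A) (h : a * Real.exp (σ t) - A ≠ 0)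
    (hσ : HasDerivWithinAt σ (barrierB a A (σ t) * v) T t) :
    HasDerivWithinAt (fun τ => barrierInv a A (σ τ)) v T t := by
  have hcomp := (hasDerivAt_barrierInv h).comp_hasDerivWithinAt t hσ
  rwa [inv_mul_cancel_left₀ (barrierB_ne_zero ha hA haA h)] at hcomp

end BarrierInv

theorem barrier_transform_pushforward_general {ι U : Type*}
    (a A : ι → ℝ) (ha : ∀ i, a i < 0) (hA : ∀ i, 0 < A i)
    (F : (ι → ℝ) → U → ι → ℝ) (ζ : (ι → ℝ) → ℝ → U)
    (s : ℝ → ι → ℝ) (T : Set ℝ) (t : ℝ)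
    (hs : ∀ i, HasDerivWithinAt (fun τ => s τ i)
      (barrierB (a i) (A i) (s t i) *
        F (fun j => barrierInv (a j) (A j) (s t j)) (ζ (s t) t) i) T t) (i : ι) :
    (a i < barrierInv (a i) (A i) (s t i) ∧ barrierInv (a i) (A i) (s t i) < A i) ∧
    HasDerivWithinAt (fun τ => barrierInv (a i) (A i) (s τ i))
      (F (fun j => barrierInv (a j) (A j) (s t j))
        (ζ (fun j => barrierFun (a j) (A j) (barrierInv (a j) (A j) (s t j))) t) i) T t := by
  have hden (j : ι) : a j * Real.exp (s t j) - A j ≠ 0 :=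
    (mul_exp_sub_neg (ha j) (hA j) (s t j)).ne
  have haA (j : ι) : a j ≠ A j := ((ha j).trans (hA j)).ne
  have hb : (fun j => barrierFun (a j) (A j) (barrierInv (a j) (A j) (s t j))) = s t :=
    funext fun j => barrierFun_barrierInv (ha j).ne (hA j).ne' (haA j) (hden j)
  rw [hb]
  exact ⟨barrierInv_mem_Ioo (ha i) (hA i) (s t i),
    hasDerivWithinAt_barrierInv_comp (ha i).ne (hA i).ne' (haA i) (hden i) (hs i)⟩

/-- a solution of the barrier-transformed system
`ṡᵢ = Bᵢ(sᵢ)(f(b⁻¹(s))θ + g(b⁻¹(s))ζ(s,t))ᵢ` is pushed forward by the inverse barrier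
transformation to a solution `x = b⁻¹(s)` of the original system
`ẋ = f(x)θ + g(x)ξ(x,t)`, with `ξ(x,t) = ζ(b(x),t)`, that stays in the constraint box
`∏ᵢ (aᵢ, Aᵢ)` for all `t ≥ 0`. -/
theorem barrier_transform_pushforward {n p q : ℕ}
    (a A : Fin n → ℝ) (ha : ∀ i, a i < 0) (hA : ∀ i, 0 < A i)
    (f : (Fin n → ℝ) → Matrix (Fin n) (Fin p) ℝ)
    (g : (Fin n → ℝ) → Matrix (Fin n) (Fin q) ℝ)
    (θ : Fin p → ℝ) (ζ : (Fin n → ℝ) → ℝ → Fin q → ℝ)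
    (s : ℝ → Fin n → ℝ)
    (hs : ∀ t ≥ (0 : ℝ), ∀ i : Fin n,
      HasDerivAt (fun τ => s τ i)
        (barrierB (a i) (A i) (s t i) *
          ((f (fun j => barrierInv (a j) (A j) (s t j)) *ᵥ θ +
            g (fun j => barrierInv (a j) (A j) (s t j)) *ᵥ ζ (s t) t) i)) t) :
    ∀ t ≥ (0 : ℝ), ∀ i : Fin n,
      (a i < barrierInv (a i) (A i) (s t i) ∧ barrierInv (a i) (A i) (s t i) < A i) ∧
      HasDerivAt (fun τ => barrierInv (a i) (A i) (s τ i))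
        ((f (fun j => barrierInv (a j) (A j) (s t j)) *ᵥ θ +
          g (fun j => barrierInv (a j) (A j) (s t j)) *ᵥ
            ζ (fun j => barrierFun (a j) (A j) (barrierInv (a j) (A j) (s t j))) t) i) t := by
  simp only [← hasDerivWithinAt_univ] at hs ⊢
  exact fun t ht => barrier_transform_pushforward_general a A ha hA
    (fun x u => f x *ᵥ θ + g x *ᵥ u) ζ s Set.univ t (hs t ht)
end

section
/- Let β be a real symmetric positive definite p×p matrix, let c > 0 and T ≥ 0, and let M : [0,∞) → Matrix (Fin p) (Fin p) ℝ be continuous with M(t) symmetric positive semidefinite for all t ≥ 0 and satisfying xᵀM(t)x ≥ c‖x‖² for all x ∈ ℝᵖ and all t ≥ T. If v : [0,∞) → ℝᵖ is differentiable with v'(t) = −β·M(t)·v(t) for all t ≥ 0, then there exist constants K > 0 and λ > 0 such that ‖v(t)‖ ≤ K·e^{−λ(t−T)}·‖v(T)‖ for all t ≥ T; in particular v(t) → 0 as t → ∞. -/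
open Matrix

/-!
With `V(θ) = ½ θᵀβ⁻¹θ`, the equation `θ' = -β u` gives `V' = -θᵀu`: the gain cancels, and
`θᵀu ≥ c‖θ‖²` becomes `V' ≤ -c‖θ‖²`. In finite dimension `V` and `‖·‖²` bound each other up to
constants, so `V' ≤ -k V` for some `k > 0`; Grönwall's inequality makes `V`, hence `‖θ‖²`, decay
exponentially.
-/

section Real

open Set Filter Topology

variable {T : ℝ}

lemma le_mul_exp_of_deriv_le_mul {f f' : ℝ → ℝ} {k : ℝ}
    (hf : ∀ t ≥ T, HasDerivWithinAt f (f' t) (Ici T) t) (hf' : ∀ t ≥ T, f' t ≤ k * f t)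
    {t : ℝ} (ht : T ≤ t) : f t ≤ f T * Real.exp (k * (t - T)) := by
  have hcont : ContinuousOn f (Icc T t) := fun s hs ↦
    (hf s hs.1).continuousWithinAt.mono Icc_subset_Ici_self
  have hslope : ∀ s ∈ Ico T t, ∀ r, f' s < r → ∃ᶠ z in 𝓝[>] s, (z - s)⁻¹ * (f z - f s) < r :=
    fun s hs r hr ↦ ((hf s hs.1).mono (Ici_subset_Ici.mpr hs.1)).liminf_right_slope_le hr
  rw [← gronwallBound_ε0]
  exact le_gronwallBound_of_liminf_deriv_right_le hcont hslope le_rfl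
    (fun s hs ↦ by simpa only [add_zero] using hf' s hs.1) t ⟨ht, le_rfl⟩

lemma sqrt_le_mul_exp_of_deriv_le_neg_mul {N V V' : ℝ → ℝ} {a b c : ℝ}
    (ha : 0 ≤ a) (hb : 0 < b) (hc : 0 ≤ c)
    (hNV : ∀ t ≥ T, N t ≤ a * V t) (hVN : ∀ t ≥ T, V t ≤ b * N t)
    (hV : ∀ t ≥ T, HasDerivWithinAt V (V' t) (Ici T) t) (hV' : ∀ t ≥ T, V' t ≤ -c * N t)
    {t : ℝ} (ht : T ≤ t) :
    √(N t) ≤ √(a * b) * Real.exp (-(c / (2 * b)) * (t - T)) * √(N T) := by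
  have hdecay : ∀ s ≥ T, V' s ≤ -(c / b) * V s := fun s hs ↦
    calc V' s ≤ -c * N s := hV' s hs
      _ = -(c / b) * (b * N s) := by field_simp
      _ ≤ -(c / b) * V s := mul_le_mul_of_nonpos_left (hVN s hs) (neg_nonpos.mpr (by positivity))
  have hN : N t ≤ a * b * Real.exp (-(c / b) * (t - T)) * N T :=
    calc N t ≤ a * V t := hNV t ht
      _ ≤ a * (V T * Real.exp (-(c / b) * (t - T))) := by
        gcongr; exact le_mul_exp_of_deriv_le_mul hV hdecay ht
      _ ≤ a * (b * N T * Real.exp (-(c / b) * (t - T))) := by gcongr; exact hVN T le_rfl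
      _ = a * b * Real.exp (-(c / b) * (t - T)) * N T := by ring
  have hexp : Real.exp (-(c / (2 * b)) * (t - T)) = √(Real.exp (-(c / b) * (t - T))) := by
    rw [← Real.exp_half]; congr 1; field_simp
  rw [hexp, ← Real.sqrt_mul (by positivity), ← Real.sqrt_mul (by positivity)]
  exact Real.sqrt_le_sqrt hN

lemma tendsto_exp_neg_mul_sub_atTop_nhds_zero {k : ℝ} (hk : 0 < k) (T : ℝ) :
    Tendsto (fun t ↦ Real.exp (-k * (t - T))) atTop (𝓝 0) :=
  Real.tendsto_exp_comp_nhds_zero.mpr <|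
    (tendsto_atTop_add_const_right _ (-T) tendsto_id).const_mul_atTop_of_neg (neg_neg_of_pos hk)

end Real

section QuadraticForm

variable {𝕜 E : Type*} [NontriviallyNormedField 𝕜] [CompleteSpace 𝕜] [Invertible (2 : 𝕜)]
  [NormedAddCommGroup E] [NormedSpace 𝕜 E] [FiniteDimensional 𝕜 E]

lemma continuous_quadraticForm (Q : QuadraticForm 𝕜 E) : Continuous Q := by
  have hQ : ⇑Q = fun x ↦ Q.associated.toContinuousBilinearMap x x :=
    funext fun x ↦ (QuadraticMap.associated_eq_self_apply 𝕜 Q x).symm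
  rw [hQ]
  fun_prop

lemma hasDerivWithinAt_quadraticForm (Q : QuadraticForm 𝕜 E) {v : 𝕜 → E} {w : E}
    {s : Set 𝕜} {t : 𝕜} (hv : HasDerivWithinAt v w s t) :
    HasDerivWithinAt (fun r ↦ Q (v r)) (QuadraticMap.polar Q (v t) w) s t := by
  let B := Q.associated.toContinuousBilinearMap
  have hQ : (fun r ↦ Q (v r)) = fun r ↦ B (v r) (v r) :=
    funext fun r ↦ (QuadraticMap.associated_eq_self_apply 𝕜 Q (v r)).symm
  have hpolar : QuadraticMap.polar Q (v t) w = B (v t) w + B w (v t) := by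
    rw [← QuadraticMap.toQuadraticMap_associated 𝕜 Q]
    exact LinearMap.BilinMap.polar_toQuadraticMap _ _
  rw [hQ, hpolar]
  exact B.hasDerivWithinAt_of_bilinear hv hv

end QuadraticForm

section RealQuadraticForm

open Set

variable {E : Type*} [NormedAddCommGroup E] [NormedSpace ℝ E] [FiniteDimensional ℝ E]

lemma exists_quadraticForm_le_mul_of_posDef (Q₁ : QuadraticForm ℝ E) {Q₂ : QuadraticForm ℝ E}
    (hQ₂ : Q₂.PosDef) : ∃ C > (0 : ℝ), ∀ x, Q₁ x ≤ C * Q₂ x := by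
  have hpos : ∀ x ∈ Metric.sphere (0 : E) 1, 0 < Q₂ x := fun x hx ↦
    hQ₂ x (ne_zero_of_mem_unit_sphere ⟨x, hx⟩)
  obtain ⟨C, hC⟩ := (isCompact_sphere (0 : E) 1).bddAbove_image <|
    (continuous_quadraticForm Q₁).continuousOn.div (continuous_quadraticForm Q₂).continuousOn
      fun x hx ↦ (hpos x hx).ne'
  refine ⟨max C 1, by positivity, fun x ↦ ?_⟩
  obtain rfl | hx := eq_or_ne x 0
  · simp only [QuadraticMap.map_zero, mul_zero, le_refl]
  have hunit : ‖x‖⁻¹ • x ∈ Metric.sphere (0 : E) 1 := by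
    simpa using norm_smul_inv_norm (𝕜 := ℝ) hx
  have hle : Q₁ (‖x‖⁻¹ • x) ≤ max C 1 * Q₂ (‖x‖⁻¹ • x) :=
    (div_le_iff₀ (hpos _ hunit)).mp ((hC ⟨_, hunit, rfl⟩).trans (le_max_left C 1))
  simp only [QuadraticMap.map_smul, smul_eq_mul, mul_left_comm (max C 1)] at hle
  exact le_of_mul_le_mul_left hle (by positivity)

theorem exists_sqrt_quadraticForm_le_mul_exp {N V : QuadraticForm ℝ E} (hN : N.PosDef)
    (hV : V.PosDef) {c : ℝ} (hc : 0 < c) :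
    ∃ K > (0 : ℝ), ∃ k > (0 : ℝ), ∀ (T : ℝ) (v v' : ℝ → E),
      (∀ t ≥ T, HasDerivWithinAt v (v' t) (Ici T) t) →
      (∀ t ≥ T, QuadraticMap.polar V (v t) (v' t) ≤ -c * N (v t)) →
      ∀ t ≥ T, √(N (v t)) ≤ K * Real.exp (-k * (t - T)) * √(N (v T)) := by
  obtain ⟨a, ha, hNV⟩ := exists_quadraticForm_le_mul_of_posDef N hV
  obtain ⟨b, hb, hVN⟩ := exists_quadraticForm_le_mul_of_posDef V hN
  refine ⟨√(a * b), by positivity, c / (2 * b), by positivity, fun T v v' hv hdecay t ht ↦ ?_⟩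
  exact sqrt_le_mul_exp_of_deriv_le_neg_mul ha.le hb hc.le
    (fun s _ ↦ hNV (v s)) (fun s _ ↦ hVN (v s))
    (fun s hs ↦ hasDerivWithinAt_quadraticForm V (hv s hs)) hdecay ht

end RealQuadraticForm

section Matrix

open Set Filter Topology

variable {n : Type*} [Fintype n]

lemma norm_le_sqrt_dotProduct_self (x : n → ℝ) : ‖x‖ ≤ √(x ⬝ᵥ x) := by
  refine (pi_norm_le_iff_of_nonneg (Real.sqrt_nonneg _)).mpr fun i ↦ Real.abs_le_sqrt ?_
  rw [sq]
  exact Finset.single_le_sum (f := fun j ↦ x j * x j) (fun j _ ↦ mul_self_nonneg (x j))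
    (Finset.mem_univ i)

/-- The Lyapunov function `V₁(θ) = ½ θᵀβ⁻¹θ` of the gain matrix `β`, as a quadratic form: it
decreases along `θ' = -β u` at the rate `θᵀu`. Since `β⁻¹ = 0` for singular `β`, it is meaningful
for invertible `β` only. -/
noncomputable def lyapunovForm [DecidableEq n] (β : Matrix n n ℝ) : QuadraticForm ℝ (n → ℝ) :=
  (2⁻¹ : ℝ) • β⁻¹.toQuadraticForm'

lemma lyapunovForm_posDef [DecidableEq n] {β : Matrix n n ℝ} (hβ : β.PosDef) :
    (lyapunovForm β).PosDef :=
  hβ.inv.toQuadraticForm'.smul (by positivity)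

lemma polar_lyapunovForm_mulVec [DecidableEq n] {β : Matrix n n ℝ} (hβ : β.IsSymm)
    (hdet : IsUnit β.det) (x y : n → ℝ) :
    QuadraticMap.polar (lyapunovForm β) x (β *ᵥ y) = x ⬝ᵥ y := by
  have hcancel : β⁻¹ *ᵥ (β *ᵥ y) = y := by
    rw [mulVec_mulVec, nonsing_inv_mul β hdet, one_mulVec]
  have hsymm : (β *ᵥ y) ⬝ᵥ (β⁻¹ *ᵥ x) = x ⬝ᵥ y := by
    rw [dotProduct_mulVec, ← mulVec_transpose, transpose_nonsing_inv, hβ.eq, hcancel,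
      dotProduct_comm]
  rw [lyapunovForm, FunLike.coe_smul, QuadraticMap.polar_smul, toQuadraticForm',
    LinearMap.BilinMap.polar_toQuadraticMap, toLinearMap₂'_apply', toLinearMap₂'_apply', hcancel,
    hsymm, smul_eq_mul]
  ring

theorem parameter_error_exponential_decay_general {β : Matrix n n ℝ} (hβ : β.PosDef)
    {c : ℝ} (hc : 0 < c) :
    ∃ K > (0 : ℝ), ∃ lam > (0 : ℝ), ∀ (T : ℝ) (v u : ℝ → n → ℝ),
      (∀ t ≥ T, HasDerivWithinAt v (-(β *ᵥ u t)) (Ici T) t) →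
      (∀ t ≥ T, c * (v t ⬝ᵥ v t) ≤ v t ⬝ᵥ u t) →
      (∀ t ≥ T, √(v t ⬝ᵥ v t) ≤ K * Real.exp (-lam * (t - T)) * √(v T ⬝ᵥ v T)) ∧
        Tendsto v atTop (𝓝 0) := by
  classical
  have hN : ∀ x : n → ℝ, (1 : Matrix n n ℝ).toQuadraticForm' x = x ⬝ᵥ x := fun x ↦ by
    rw [toQuadraticForm', LinearMap.BilinMap.toQuadraticMap_apply, toLinearMap₂'_apply', one_mulVec]
  obtain ⟨K, hK, lam, hlam, hdecay⟩ := exists_sqrt_quadraticForm_le_mul_exp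
    (Matrix.PosDef.one (n := n) (R := ℝ)).toQuadraticForm' (lyapunovForm_posDef hβ) hc
  simp only [hN] at hdecay
  refine ⟨K, hK, lam, hlam, fun T v u hv hu ↦ ?_⟩
  have hsymm : β.IsSymm := isHermitian_iff_isSymm.mp hβ.isHermitian
  have hbound := hdecay T v _ hv fun t ht ↦ by
    rw [QuadraticMap.polar_neg_right, polar_lyapunovForm_mulVec hsymm hβ.det_pos.ne'.isUnit,
      neg_mul]
    exact neg_le_neg (hu t ht)
  have hlim : Tendsto (fun t ↦ K * Real.exp (-lam * (t - T)) * √(v T ⬝ᵥ v T)) atTop (𝓝 0) := by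
    simpa only [mul_zero, zero_mul] using
      ((tendsto_exp_neg_mul_sub_atTop_nhds_zero hlam T).const_mul K).mul_const √(v T ⬝ᵥ v T)
  refine ⟨hbound, squeeze_zero_norm' ?_ hlim⟩
  filter_upwards [eventually_ge_atTop T] with t ht
  exact (norm_le_sqrt_dotProduct_self (v t)).trans (hbound t ht)

end Matrix

/-- Let `β` be real symmetric positive definite, `c > 0`, `T ≥ 0`, and
`M : [0,∞) → ℝ^{p×p}` continuous, symmetric positive semidefinite for `t ≥ 0`, with
`xᵀM(t)x ≥ c‖x‖²` for all `x` and `t ≥ T`. If `v' = −β·M(t)·v` for `t ≥ 0`, then there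
are `K > 0` and `λ > 0` with `‖v(t)‖ ≤ K·e^{−λ(t−T)}·‖v(T)‖` for all `t ≥ T`; in
particular `v(t) → 0`. (Here `‖x‖ = √(xᵀx)` is the Euclidean norm.) -/
theorem parameter_error_exponential_decay {p : ℕ}
    (β : Matrix (Fin p) (Fin p) ℝ) (hβ : β.PosDef)
    (c T : ℝ) (hc : 0 < c) (hT : 0 ≤ T)
    (M : ℝ → Matrix (Fin p) (Fin p) ℝ) (hMcont : Continuous M)
    (hMpsd : ∀ t ≥ (0 : ℝ), (M t).PosSemidef)
    (hMpd : ∀ t ≥ T, ∀ x : Fin p → ℝ, c * (x ⬝ᵥ x) ≤ x ⬝ᵥ (M t *ᵥ x))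
    (v : ℝ → Fin p → ℝ)
    (hv : ∀ t ≥ (0 : ℝ), HasDerivAt v (-(β *ᵥ (M t *ᵥ v t))) t) :
    (∃ K > (0 : ℝ), ∃ lam > (0 : ℝ), ∀ t ≥ T,
      Real.sqrt (v t ⬝ᵥ v t) ≤ K * Real.exp (-lam * (t - T)) * Real.sqrt (v T ⬝ᵥ v T)) ∧
      Filter.Tendsto v Filter.atTop (nhds 0) := by
  obtain ⟨K, hK, lam, hlam, hdecay⟩ := parameter_error_exponential_decay_general hβ hc
  have hT_decay := hdecay T v (fun t ↦ M t *ᵥ v t)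
    (fun t ht ↦ (hv t (hT.trans ht)).hasDerivWithinAt) (fun t ht ↦ hMpd t ht (v t))
  exact ⟨⟨K, hK, lam, hlam, hT_decay.1⟩, hT_decay.2⟩
end

section
/- Fix dimensions n, p, q, L ∈ ℕ. Let s ∈ ℝⁿ, Q ∈ ℝ^{n×n}, R ∈ ℝ^{q×q} with R symmetric and invertible, y ∈ ℝ^{n×p}, G ∈ ℝ^{n×q}, θ, θ̂ ∈ ℝᵖ, W, Ŵ_c, Ŵ_a ∈ ℝ^L, σ' ∈ ℝ^{L×n} (the Jacobian of the value-function basis at s), and ε' ∈ ℝ^{1×n} (the gradient of the reconstruction error at s). Define F := y·θ, u* := −(1/2)R⁻¹Gᵀ(σ'ᵀW + ε'ᵀ), û := −(1/2)R⁻¹Gᵀσ'ᵀŴ_a, the Bellman error δ̂ := Ŵ_cᵀσ'(y·θ̂ + G·û) + ûᵀRû + sᵀQs, the estimation errors W̃_c := W − Ŵ_c, W̃_a := W − Ŵ_a, θ̃ := θ − θ̂, and the quantities ω := σ'(y·θ̂ + G·û), G_R := GR⁻¹Gᵀ, G_σ := σ'GR⁻¹Gᵀσ'ᵀ, G_ε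 := ε'G_Rε'ᵀ, Δ := (1/2)Wᵀσ'G_Rε'ᵀ + (1/4)G_ε − ε'F. If the Hamilton–Jacobi–Bellman relation (Wᵀσ' + ε')(y·θ + G·u*) + sᵀQs + u*ᵀRu* = 0 holds, then δ̂ = −ωᵀW̃_c + (1/4)W̃_aᵀG_σW̃_a − Wᵀσ'·y·θ̃ + Δ. -/
open Matrix

/-!
For the policy `π(w) = -½ R⁻¹ Gᵀ w` and `G_R = G R⁻¹ Gᵀ`, completing the square in the costate error
gives the Hamiltonian `H(v, π(w)) = v·f + c - ¼ v·G_R v + ¼ (v - w)·G_R (v - w)`.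
At the exact value gradient `v + ε'` the square vanishes, so the HJB equation determines the state
cost `c`. For the Bellman error, linearity of `H` in the costate splits off the critic term, and
the square at `v` and the actor gradient `va` is the actor term. The decomposition is the case in
which `v`, `vc`, `va` are the images of `W`, `Wc`, `Wa` under `σ'ᵀ`.
-/

section QuadraticForm

variable {α m n : Type*} [CommSemiring α] [Fintype n]

theorem transpose_mulVec_dotProduct [Fintype m] (A : Matrix m n α) (x : m → α) (y : n → α) :
    (Aᵀ *ᵥ x) ⬝ᵥ y = x ⬝ᵥ (A *ᵥ y) := by
  rw [dotProduct_comm, dotProduct_transpose_mulVec]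

theorem isSymm_mul_mul_transpose {S : Matrix n n α} (hS : S.IsSymm) (A : Matrix m n α) :
    (A * S * Aᵀ).IsSymm := by
  rw [IsSymm, transpose_mul, transpose_mul, transpose_transpose, hS.eq, Matrix.mul_assoc]

theorem dotProduct_mulVec_comm_of_isSymm {S : Matrix n n α} (hS : S.IsSymm) (v w : n → α) :
    v ⬝ᵥ (S *ᵥ w) = w ⬝ᵥ (S *ᵥ v) := by
  rw [← dotProduct_transpose_mulVec, hS.eq]

theorem add_dotProduct_mulVec_add_of_isSymm {S : Matrix n n α} (hS : S.IsSymm) (v w : n → α) :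
    (v + w) ⬝ᵥ (S *ᵥ (v + w)) =
      v ⬝ᵥ (S *ᵥ v) + 2 * (v ⬝ᵥ (S *ᵥ w)) + w ⬝ᵥ (S *ᵥ w) := by
  rw [mulVec_add, add_dotProduct, dotProduct_add, dotProduct_add,
    dotProduct_mulVec_comm_of_isSymm hS w v]
  ring

theorem sub_dotProduct_mulVec_sub_of_isSymm {β : Type*} [CommRing β] {S : Matrix n n β}
    (hS : S.IsSymm) (v w : n → β) :
    (v - w) ⬝ᵥ (S *ᵥ (v - w)) =
      v ⬝ᵥ (S *ᵥ v) - 2 * (v ⬝ᵥ (S *ᵥ w)) + w ⬝ᵥ (S *ᵥ w) := by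
  rw [sub_eq_add_neg, add_dotProduct_mulVec_add_of_isSymm hS]
  simp only [mulVec_neg, dotProduct_neg, neg_dotProduct]
  ring

end QuadraticForm

theorem one_half_eq_two_mul_one_quarter {K : Type*} [Field K] [NeZero (2 : K)] :
    (1 / 2 : K) = 2 * (1 / 4) := by
  rw [show (4 : K) = 2 * 2 by norm_num]
  field_simp

section ControlAffine

variable {K n q : Type*} [Fintype q]

/-- The matrix `G_R = G R⁻¹ Gᵀ` of the quadratic form in the costate that is left once the control
has been eliminated from the Hamiltonian. -/
noncomputable def controlGram [CommRing K] [DecidableEq q] (R : Matrix q q K) (G : Matrix n q K) :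
    Matrix n n K :=
  G * R⁻¹ * Gᵀ

theorem isSymm_controlGram [CommRing K] [DecidableEq q] {R : Matrix q q K} (hR : R.IsSymm)
    (G : Matrix n q K) : (controlGram R G).IsSymm :=
  isSymm_mul_mul_transpose hR.inv G

variable [Fintype n]

/-- The control `-½ R⁻¹ Gᵀ v`, the stationary point of the Hamiltonian at costate `v`. It gives the
optimal policy at the exact value gradient and the approximate one at an estimated gradient. -/
noncomputable def costatePolicy [Field K] [DecidableEq q] (R : Matrix q q K) (G : Matrix n q K)
    (v : n → K) : q → K :=
  -(1 / 2 : K) • (R⁻¹ *ᵥ (Gᵀ *ᵥ v))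

/-- The Hamiltonian of the control-affine dynamics `f + G u` with running cost `c + uᵀ R u`, at
costate `v` and control `u`. The state is fixed, so `f`, `G`, `c` are values at that state. -/
def hamiltonian [CommSemiring K] (R : Matrix q q K) (G : Matrix n q K) (c : K) (f v : n → K)
    (u : q → K) : K :=
  v ⬝ᵥ (f + G *ᵥ u) + u ⬝ᵥ (R *ᵥ u) + c

theorem hamiltonian_sub [CommRing K] (R : Matrix q q K) (G : Matrix n q K) (c : K) (f v w : n → K)
    (u : q → K) :
    hamiltonian R G c f (v - w) u = hamiltonian R G c f v u - w ⬝ᵥ (f + G *ᵥ u) := by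
  simp only [hamiltonian, sub_dotProduct]
  ring

variable [Field K] [DecidableEq q]

theorem mulVec_costatePolicy (R : Matrix q q K) (G : Matrix n q K) (w : n → K) :
    G *ᵥ costatePolicy R G w = -(1 / 2 : K) • (controlGram R G *ᵥ w) := by
  simp only [costatePolicy, controlGram, mulVec_smul, mulVec_mulVec, Matrix.mul_assoc]

theorem costatePolicy_dotProduct_mulVec {R : Matrix q q K} (hR : IsUnit R.det) (G : Matrix n q K)
    (w : n → K) :
    costatePolicy R G w ⬝ᵥ (R *ᵥ costatePolicy R G w) =
      (1 / 4 : K) * (w ⬝ᵥ (controlGram R G *ᵥ w)) := by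
  have hRu : R *ᵥ costatePolicy R G w = -(1 / 2 : K) • (Gᵀ *ᵥ w) := by
    rw [costatePolicy, mulVec_smul, mulVec_mulVec, mul_nonsing_inv R hR, one_mulVec]
  have h_quarter : (1 / 4 : K) = 1 / 2 * (1 / 2) := by
    rw [show (4 : K) = 2 * 2 by norm_num, one_div_mul_one_div]
  rw [hRu, dotProduct_smul, dotProduct_transpose_mulVec, mulVec_costatePolicy, dotProduct_smul,
    smul_eq_mul, smul_eq_mul, h_quarter]
  ring

theorem hamiltonian_costatePolicy [NeZero (2 : K)] {R : Matrix q q K} (hRsymm : R.IsSymm)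
    (hRinv : IsUnit R.det) (G : Matrix n q K) (c : K) (f v w : n → K) :
    hamiltonian R G c f v (costatePolicy R G w) =
      v ⬝ᵥ f + c - (1 / 4 : K) * (v ⬝ᵥ (controlGram R G *ᵥ v)) +
        (1 / 4 : K) * ((v - w) ⬝ᵥ (controlGram R G *ᵥ (v - w))) := by
  rw [hamiltonian, mulVec_costatePolicy, costatePolicy_dotProduct_mulVec hRinv,
    sub_dotProduct_mulVec_sub_of_isSymm (isSymm_controlGram hRsymm G), dotProduct_add,
    dotProduct_smul, smul_eq_mul, one_half_eq_two_mul_one_quarter]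
  ring

theorem bellman_error_decomposition_general [NeZero (2 : K)] {R : Matrix q q K}
    (hRsymm : R.IsSymm) (hRinv : IsUnit R.det) (G : Matrix n q K) (c : K)
    (f fhat v vc va ε' : n → K)
    (hHJB : hamiltonian R G c f (v + ε') (costatePolicy R G (v + ε')) = 0) :
    hamiltonian R G c fhat vc (costatePolicy R G va) =
      -((v - vc) ⬝ᵥ (fhat + G *ᵥ costatePolicy R G va)) +
        (1 / 4 : K) * ((v - va) ⬝ᵥ (controlGram R G *ᵥ (v - va))) - v ⬝ᵥ (f - fhat) +
        ((1 / 2 : K) * (v ⬝ᵥ (controlGram R G *ᵥ ε')) +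
          (1 / 4 : K) * (ε' ⬝ᵥ (controlGram R G *ᵥ ε')) - ε' ⬝ᵥ f) := by
  have h_cost : c = (1 / 4 : K) * ((v + ε') ⬝ᵥ (controlGram R G *ᵥ (v + ε'))) - (v + ε') ⬝ᵥ f := by
    rw [hamiltonian_costatePolicy hRsymm hRinv, sub_self, zero_dotProduct] at hHJB
    linear_combination hHJB
  have h_critic : hamiltonian R G c fhat vc (costatePolicy R G va) =
      hamiltonian R G c fhat v (costatePolicy R G va) -
        (v - vc) ⬝ᵥ (fhat + G *ᵥ costatePolicy R G va) := by
    rw [← hamiltonian_sub, sub_sub_cancel]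
  rw [add_dotProduct_mulVec_add_of_isSymm (isSymm_controlGram hRsymm G), add_dotProduct] at h_cost
  rw [h_critic, hamiltonian_costatePolicy hRsymm hRinv, dotProduct_sub v f,
    one_half_eq_two_mul_one_quarter]
  linear_combination h_cost

end ControlAffine

/-- the analytical Bellman error decomposition. With
`u* = −(1/2)R⁻¹Gᵀ(σ'ᵀW + ε'ᵀ)`, `û = −(1/2)R⁻¹Gᵀσ'ᵀŴ_a`,
`δ̂ = Ŵ_cᵀσ'(yθ̂ + Gû) + ûᵀRû + sᵀQs`, `ω = σ'(yθ̂ + Gû)`, `G_R = GR⁻¹Gᵀ`,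
`G_σ = σ'GR⁻¹Gᵀσ'ᵀ`, `G_ε = ε'G_Rε'ᵀ`, `Δ = (1/2)Wᵀσ'G_Rε'ᵀ + (1/4)G_ε − ε'F`,
`F = yθ`: if the HJB relation `(Wᵀσ' + ε')(yθ + Gu*) + sᵀQs + u*ᵀRu* = 0` holds, then
`δ̂ = −ωᵀW̃_c + (1/4)W̃_aᵀG_σW̃_a − Wᵀσ'yθ̃ + Δ`. -/
theorem bellman_error_decomposition {n p q L : ℕ}
    (s : Fin n → ℝ) (Q : Matrix (Fin n) (Fin n) ℝ)
    (R : Matrix (Fin q) (Fin q) ℝ) (hRsymm : R.IsSymm) (hRinv : IsUnit R.det)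
    (y : Matrix (Fin n) (Fin p) ℝ) (G : Matrix (Fin n) (Fin q) ℝ)
    (θ θhat : Fin p → ℝ) (W Wc Wa : Fin L → ℝ)
    (σ' : Matrix (Fin L) (Fin n) ℝ) (ε' : Fin n → ℝ) :
    let F : Fin n → ℝ := y *ᵥ θ
    let ustar : Fin q → ℝ := -(1/2 : ℝ) • (R⁻¹ *ᵥ (Gᵀ *ᵥ (σ'ᵀ *ᵥ W + ε')))
    let uhat : Fin q → ℝ := -(1/2 : ℝ) • (R⁻¹ *ᵥ (Gᵀ *ᵥ (σ'ᵀ *ᵥ Wa)))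
    let δhat : ℝ := Wc ⬝ᵥ (σ' *ᵥ (y *ᵥ θhat + G *ᵥ uhat)) + uhat ⬝ᵥ (R *ᵥ uhat) +
      s ⬝ᵥ (Q *ᵥ s)
    let Wctil : Fin L → ℝ := W - Wc
    let Watil : Fin L → ℝ := W - Wa
    let θtil : Fin p → ℝ := θ - θhat
    let ω : Fin L → ℝ := σ' *ᵥ (y *ᵥ θhat + G *ᵥ uhat)
    let GR : Matrix (Fin n) (Fin n) ℝ := G * R⁻¹ * Gᵀ
    let Gσ : Matrix (Fin L) (Fin L) ℝ := σ' * G * R⁻¹ * Gᵀ * σ'ᵀ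
    let Gε : ℝ := ε' ⬝ᵥ (GR *ᵥ ε')
    let Δ : ℝ := (1/2 : ℝ) * (W ⬝ᵥ (σ' *ᵥ (GR *ᵥ ε'))) + (1/4 : ℝ) * Gε - ε' ⬝ᵥ F
    W ⬝ᵥ (σ' *ᵥ (y *ᵥ θ + G *ᵥ ustar)) + ε' ⬝ᵥ (y *ᵥ θ + G *ᵥ ustar) +
        s ⬝ᵥ (Q *ᵥ s) + ustar ⬝ᵥ (R *ᵥ ustar) = 0 →
      δhat = -(ω ⬝ᵥ Wctil) + (1/4 : ℝ) * (Watil ⬝ᵥ (Gσ *ᵥ Watil)) -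
        W ⬝ᵥ (σ' *ᵥ (y *ᵥ θtil)) + Δ := by
  intro F ustar uhat δhat Wctil Watil θtil ω GR Gσ Gε Δ hHJB
  have hHJB_costate : hamiltonian R G (s ⬝ᵥ (Q *ᵥ s)) F (σ'ᵀ *ᵥ W + ε')
      (costatePolicy R G (σ'ᵀ *ᵥ W + ε')) = 0 := by
    rw [hamiltonian, add_dotProduct, transpose_mulVec_dotProduct, add_right_comm]
    exact hHJB
  have h_actor : Watil ⬝ᵥ (Gσ *ᵥ Watil) =
      Watil ⬝ᵥ (σ' *ᵥ (controlGram R G *ᵥ (σ'ᵀ *ᵥ Watil))) := by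
    simp only [Gσ, controlGram, mulVec_mulVec, Matrix.mul_assoc]
  have h_error := bellman_error_decomposition_general hRsymm hRinv G (s ⬝ᵥ (Q *ᵥ s)) F
    (y *ᵥ θhat) (σ'ᵀ *ᵥ W) (σ'ᵀ *ᵥ Wc) (σ'ᵀ *ᵥ Wa) ε' hHJB_costate
  rw [h_actor, dotProduct_comm ω]
  simp only [hamiltonian, F, ← mulVec_sub, transpose_mulVec_dotProduct] at h_error
  exact h_error
end
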